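/- The subtree density of the comb satisfies D(C_n) → 3/4 as n → ∞. -/

import Mathlib

/-- A subtree of a graph: a nonempty set of vertices inducing a connected subgraph. -/
def IsSubtree {V : Type*} (G : SimpleGraph V) (S : Finset V) : Prop :=
  S.Nonempty ∧ (G.induce (S : Set V)).Connected

/-- `N(T)`: the number of subtrees. -/
noncomputable def numSubtrees {V : Type*} [Fintype V] (G : SimpleGraph V) : ℕ :=
  Nat.card {S : Finset V // IsSubtree G S}

/-- `R(T) = Σ_S |S|`: the total number of vertices over all subtrees. -/
noncomputable def totalSubtreeOrder {V : Type*} [Fintype V] (G : SimpleGraph V) : ℕ :=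
  ∑ S ∈ (Set.toFinite {S : Finset V | IsSubtree G S}).toFinset, S.card

/-- `μ(T)`: the average subtree order. -/
noncomputable def avgSubtreeOrder {V : Type*} [Fintype V] (G : SimpleGraph V) : ℝ :=
  (totalSubtreeOrder G : ℝ) / (numSubtrees G : ℝ)

/-- `D(T) = μ(T)/|T|`: the subtree density. -/
noncomputable def subtreeDensity {V : Type*} [Fintype V] (G : SimpleGraph V) : ℝ :=
  avgSubtreeOrder G / (Fintype.card V : ℝ)

/-- The comb `C_n`: a path with `n` vertices (the `Sum.inl` vertices), with one pendant
leaf (the corresponding `Sum.inr` vertex) attached to each path vertex. -/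
def comb (n : ℕ) : SimpleGraph (Fin n ⊕ Fin n) :=
  SimpleGraph.fromRel fun a b => match a, b with
    | Sum.inl i, Sum.inl j => (i : ℕ) + 1 = (j : ℕ)
    | Sum.inl i, Sum.inr j => i = j
    | _, _ => False

/-! Let `Φ_G = Σ_S X ^ |S|` be the generating polynomial of the subtrees `S` of `G`, so that
`N(G) = Φ_G(1)` and `Σ_S |S| = Φ_G'(1)`. The comb is the corona of a path. A subtree of the
corona of `H`, obtained by attaching a leaf to every vertex of `H`, is either a single leaf or a
subtree `A` of `H` together with any of the leaves at `A`; hence the corona has the polynomial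
`|H| X + Φ_H(X + X²)`, and only `Φ_H(2)` and `Φ_H'(2)` matter. For the path, whose subtrees are
its intervals, a geometric summation gives `(X - 1)² Φ = X ^ (n + 2) - (n + 1) X² + n X`.
Therefore `N(C_n) ~ 4 * 2 ^ n` and `Σ_S |S| ~ 6 n * 2 ^ n`, and the density tends to
`6 / (4 * 2) = 3 / 4`. -/

open Finset Polynomial

section Subtree

variable {V W : Type*} {G : SimpleGraph V} {H : SimpleGraph W} {S : Finset V}

theorem isSubtree_singleton (G : SimpleGraph V) (v : V) : IsSubtree G {v} := by
  refine ⟨singleton_nonempty v, ?_⟩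
  rw [coe_singleton]
  exact { preconnected := .of_subsingleton, nonempty := ⟨⟨v, rfl⟩⟩ }

theorem IsSubtree.insert [DecidableEq V] (hS : IsSubtree G S) {u v : V} (hu : u ∈ S)
    (huv : G.Adj u v) : IsSubtree G (insert v S) := by
  refine ⟨insert_nonempty v S, ?_⟩
  have hunion : ((Insert.insert v S : Finset V) : Set V) = ↑S ∪ {u, v} := by
    ext w
    simp only [coe_insert, Set.mem_insert_iff, mem_coe, Set.mem_union, Set.mem_singleton_iff]
    grind
  rw [hunion]
  exact SimpleGraph.induce_union_connected hS.2.preconnected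
    (SimpleGraph.induce_pair_connected_of_adj huv).preconnected ⟨u, hu, .inl rfl⟩

theorem IsSubtree.image [DecidableEq W] (hS : IsSubtree G S) (f : V → W)
    (hf : ∀ u ∈ S, ∀ v ∈ S, G.Adj u v → f u = f v ∨ H.Adj (f u) (f v)) :
    IsSubtree H (S.image f) := by
  refine ⟨hS.1.image f, { preconnected := ?_, nonempty := (hS.1.image f).to_subtype }⟩
  rintro ⟨_, hx⟩ ⟨_, hy⟩
  obtain ⟨u, hu, rfl⟩ := mem_image.1 (mem_coe.1 hx)
  obtain ⟨v, hv, rfl⟩ := mem_image.1 (mem_coe.1 hy)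
  let g : S → (S.image f : Set W) := fun w => ⟨f w, mem_coe.2 (mem_image_of_mem f w.2)⟩
  have hreach := hS.2.preconnected ⟨u, hu⟩ ⟨v, hv⟩
  rw [SimpleGraph.reachable_iff_reflTransGen] at hreach ⊢
  refine hreach.lift' g fun a b hab => ?_
  rcases hf a a.2 b b.2 hab with heq | hadj
  · have hg : g a = g b := Subtype.ext heq
    rw [Function.onFun, hg]
  · exact .single hadj

theorem IsSubtree.exists_boundary_adj (hS : IsSubtree G S) {P : V → Prop} {x y : V} (hx : x ∈ S)
    (hy : y ∈ S) (hPx : P x) (hPy : ¬ P y) : ∃ u ∈ S, ∃ v ∈ S, G.Adj u v ∧ P u ∧ ¬ P v := by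
  obtain ⟨w⟩ := hS.2.preconnected ⟨x, hx⟩ ⟨y, hy⟩
  obtain ⟨d, -, hfst, hsnd⟩ := w.exists_boundary_dart {v | P v} hPx hPy
  exact ⟨d.fst, d.fst.2, d.snd, d.snd.2, d.adj, hfst, hsnd⟩

end Subtree

section SubtreePolynomial

variable {V : Type*} [Fintype V] (G : SimpleGraph V)

/-- The set of all subtrees of a graph, as a `Finset` so that one can sum over it. -/
noncomputable def subtrees : Finset (Finset V) :=
  (Set.toFinite {S : Finset V | IsSubtree G S}).toFinset

/-- The generating polynomial `Φ_G = Σ_S X ^ |S|` of the subtrees of `G` by order. Its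
coefficients are taken in `ℝ`, where the subtree density lives. -/
noncomputable def subtreePolynomial : ℝ[X] :=
  ∑ S ∈ subtrees G, X ^ #S

variable {G} in
theorem mem_subtrees {S : Finset V} : S ∈ subtrees G ↔ IsSubtree G S := by
  simp [subtrees]

theorem numSubtrees_eq_eval : (numSubtrees G : ℝ) = (subtreePolynomial G).eval 1 := by
  have hcard : numSubtrees G = #(subtrees G) := Nat.card_eq_card_finite_toFinset _
  simp [hcard, subtreePolynomial, eval_finsetSum]

theorem totalSubtreeOrder_eq_eval_derivative :
    (totalSubtreeOrder G : ℝ) = (derivative (subtreePolynomial G)).eval 1 := by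
  simp [totalSubtreeOrder, subtreePolynomial, subtrees, eval_finsetSum, derivative_X_pow]

end SubtreePolynomial

section Corona

variable {V : Type*} {H : SimpleGraph V}

/-- The corona `H ∘ K₁`: every vertex `v` of `H`, encoded as `Sum.inl v`, receives one pendant
leaf `Sum.inr v`. The comb is the corona of a path. -/
def corona (H : SimpleGraph V) : SimpleGraph (V ⊕ V) where
  Adj
    | .inl u, .inl v => H.Adj u v
    | .inl u, .inr v => u = v
    | .inr u, .inl v => u = v
    | .inr _, .inr _ => False
  symm := ⟨by
    rintro (u | u) (v | v) h
    exacts [H.adj_symm h, Eq.symm h, Eq.symm h, h]⟩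
  loopless := ⟨by
    rintro (u | u) h
    exacts [H.irrefl h, h]⟩

theorem isSubtree_corona_disjSum {A L : Finset V} (hA : IsSubtree H A) (hL : L ⊆ A) :
    IsSubtree (corona H) (A.disjSum L) := by
  classical
  induction L using Finset.induction_on with
  | empty =>
    rw [disjSum_empty, map_eq_image]
    exact hA.image Sum.inl fun _ _ _ _ h => .inr h
  | insert v L _ ih =>
    rw [insert_subset_iff] at hL
    have hinsert : A.disjSum (insert v L) = insert (Sum.inr v) (A.disjSum L) := by
      ext (w | w) <;> simp
    rw [hinsert]
    exact (ih hL.2).insert (inl_mem_disjSum.2 hL.1) (show v = v from rfl)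

theorem IsSubtree.eq_singleton_inr {S : Finset (V ⊕ V)} (hS : IsSubtree (corona H) S) {v : V}
    (hr : .inr v ∈ S) (hl : .inl v ∉ S) : S = {.inr v} := by
  refine eq_singleton_iff_unique_mem.2 ⟨hr, fun y hy => ?_⟩
  by_contra hne
  obtain ⟨_, -, u | u, hu, hadj, rfl, -⟩ := hS.exists_boundary_adj (P := (· = .inr v)) hr hy rfl hne
  · obtain rfl : v = u := hadj
    exact hl hu
  · exact hadj

theorem IsSubtree.toLeft {S : Finset (V ⊕ V)} (hS : IsSubtree (corona H) S)
    (h : S.toRight ⊆ S.toLeft) : IsSubtree H S.toLeft := by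
  classical
  -- Collapsing every leaf onto its neighbour maps edges to edges or vertices.
  have himage : S.toLeft = S.image (Sum.elim id id) := by
    ext v
    have := @h v
    simp only [mem_toLeft, mem_toRight, mem_image, Sum.exists, Sum.elim_inl, Sum.elim_inr,
      id_eq, exists_eq_right] at this ⊢
    tauto
  rw [himage]
  refine hS.image _ ?_
  rintro (u | u) - (v | v) - hadj
  exacts [.inr hadj, .inl hadj, .inl hadj, hadj.elim]

theorem isSubtree_corona_iff {S : Finset (V ⊕ V)} :
    IsSubtree (corona H) S ↔
      (∃ v, S = {.inr v}) ∨ IsSubtree H S.toLeft ∧ S.toRight ⊆ S.toLeft := by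
  constructor
  · intro hS
    by_cases h : S.toRight ⊆ S.toLeft
    · exact .inr ⟨hS.toLeft h, h⟩
    · obtain ⟨v, hr, hl⟩ := not_subset.1 h
      exact .inl ⟨v, hS.eq_singleton_inr (mem_toRight.1 hr) (mem_toLeft.not.1 hl)⟩
  · rintro (⟨v, rfl⟩ | ⟨hA, hL⟩)
    · exact isSubtree_singleton _ _
    · rw [← toLeft_disjSum_toRight (u := S)]
      exact isSubtree_corona_disjSum hA hL

theorem sum_powerset_pow_card_add_card {R : Type*} [CommSemiring R] (x : R) (A : Finset V) :
    ∑ L ∈ A.powerset, x ^ (#A + #L) = (x + x ^ 2) ^ #A := by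
  have hbinom : ∑ L ∈ A.powerset, x ^ #L = (x + 1) ^ #A := by
    simpa using sum_pow_mul_eq_add_pow x 1 A
  simp only [pow_add, ← mul_sum, hbinom, ← mul_pow]
  ring

variable [Fintype V]

theorem subtrees_corona [DecidableEq V] (H : SimpleGraph V) :
    subtrees (corona H) = univ.image (fun v => {.inr v}) ∪
      ((subtrees H).sigma powerset).image fun x => x.1.disjSum x.2 := by
  ext S
  simp only [mem_subtrees, isSubtree_corona_iff, mem_union, mem_image, mem_univ, true_and,
    mem_sigma, mem_powerset, Sigma.exists, disjSum_eq_iff]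
  grind

theorem subtreePolynomial_corona (H : SimpleGraph V) :
    subtreePolynomial (corona H) =
      (Fintype.card V : ℝ[X]) * X + (subtreePolynomial H).comp (X + X ^ 2) := by
  classical
  have hdisj : Disjoint (univ.image fun v : V => ({.inr v} : Finset (V ⊕ V)))
      (((subtrees H).sigma powerset).image fun x => x.1.disjSum x.2) := by
    simp only [disjoint_left, mem_image, mem_univ, true_and, mem_sigma, mem_subtrees]
    rintro _ ⟨v, rfl⟩ ⟨⟨A, L⟩, ⟨hA, -⟩, h⟩
    have hempty : A = ∅ := by
      refine (disjSum_eq_iff.1 h).1.trans ?_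
      ext
      simp
    exact hA.1.ne_empty hempty
  rw [subtreePolynomial, subtrees_corona, sum_union hdisj,
    sum_image fun _ _ _ _ h => Sum.inr_injective (singleton_injective h),
    sum_image fun x _ y _ h => Sigma.ext (disjSum_inj.1 h).1 (heq_of_eq (disjSum_inj.1 h).2)]
  simp [sum_sigma, sum_powerset_pow_card_add_card, subtreePolynomial]

theorem numSubtrees_corona (H : SimpleGraph V) :
    (numSubtrees (corona H) : ℝ) = Fintype.card V + (subtreePolynomial H).eval 2 := by
  rw [numSubtrees_eq_eval, subtreePolynomial_corona]
  norm_num [eval_comp]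

theorem totalSubtreeOrder_corona (H : SimpleGraph V) :
    (totalSubtreeOrder (corona H) : ℝ) =
      Fintype.card V + 3 * (derivative (subtreePolynomial H)).eval 2 := by
  rw [totalSubtreeOrder_eq_eval_derivative, subtreePolynomial_corona]
  norm_num [derivative_comp, eval_comp]

end Corona

section Hasse

variable {α : Type*} [LinearOrder α]

theorem IsSubtree.ordConnected {S : Finset α} (hS : IsSubtree (SimpleGraph.hasse α) S) :
    (S : Set α).OrdConnected := by
  refine ⟨fun a ha b hb c hc => ?_⟩
  by_contra hcS
  have hac : a < c := hc.1.lt_of_ne fun h => hcS (h ▸ ha)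
  obtain ⟨u, -, v, hv, hadj, huc, hvc⟩ :=
    hS.exists_boundary_adj (P := (· < c)) ha hb hac hc.2.not_gt
  have hcv : c < v := (not_lt.1 hvc).lt_of_ne fun h => hcS (h ▸ hv)
  rcases hadj with huv | hvu
  · exact huv.2 huc hcv
  · exact (huc.trans hcv).not_gt hvu.lt

variable [LocallyFiniteOrder α]

theorem isSubtree_hasse_Icc {a b : α} (hab : a ≤ b) :
    IsSubtree (SimpleGraph.hasse α) (Icc a b) := by
  induction le_iff_reflTransGen_covBy.1 hab with
  | refl => simpa using isSubtree_singleton _ a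
  | @tail c b hac hcb ih =>
    have hac : a ≤ c := le_iff_reflTransGen_covBy.2 hac
    have hinsert : Icc a b = insert b (Icc a c) := by
      ext x
      have := hcb.lt_iff_le_left (z := x)
      simp only [mem_Icc, mem_insert]
      grind
    rw [hinsert]
    exact (ih hac).insert (right_mem_Icc.2 hac) (.inl hcb)

theorem isSubtree_hasse_iff {S : Finset α} :
    IsSubtree (SimpleGraph.hasse α) S ↔ ∃ a b, a ≤ b ∧ S = Icc a b := by
  constructor
  · intro hS
    refine ⟨S.min' hS.1, S.max' hS.1, min'_le_max' S hS.1, ?_⟩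
    ext c
    refine ⟨fun hc => mem_Icc.2 ⟨min'_le S c hc, le_max' S c hc⟩, fun hc => ?_⟩
    exact hS.ordConnected.out (min'_mem S hS.1) (max'_mem S hS.1) (mem_Icc.1 hc)
  · rintro ⟨a, b, hab, rfl⟩
    exact isSubtree_hasse_Icc hab

theorem subtreePolynomial_hasse [Fintype α] [LocallyFiniteOrderBot α] :
    subtreePolynomial (SimpleGraph.hasse α) = ∑ b : α, ∑ a ∈ Iic b, X ^ #(Icc a b) := by
  have himage : subtrees (SimpleGraph.hasse α) =
      (univ.sigma Iic).image fun x => Icc x.2 x.1 := by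
    ext S
    simp only [mem_subtrees, isSubtree_hasse_iff, mem_image, mem_sigma, mem_univ, true_and,
      mem_Iic, Sigma.exists]
    grind
  have hinj : Set.InjOn (fun x : (_ : α) × α => Icc x.2 x.1)
      ↑(univ.sigma Iic : Finset ((_ : α) × α)) := by
    rintro ⟨b, a⟩ hab ⟨b', a'⟩ - h
    simp only [coe_sigma, Set.mem_sigma_iff, coe_Iic, Set.mem_Iic] at hab
    have h' : Set.Icc a b = Set.Icc a' b' := by simpa using congrArg ((↑) : _ → Set α) h
    obtain ⟨rfl, rfl⟩ := (Set.Icc_eq_Icc_iff hab.2).1 h'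
    rfl
  rw [subtreePolynomial, himage, sum_image hinj, sum_sigma]

end Hasse

section PathGraph

open SimpleGraph

theorem sum_Iic_card_Icc {M : Type*} [AddCommMonoid M] {n : ℕ} (g : ℕ → M) (b : Fin n) :
    ∑ a ∈ Iic b, g #(Icc a b) = ∑ k ∈ range (b + 1), g (k + 1) := by
  rw [← sum_range_reflect, Nat.range_succ_eq_Iic, ← Fin.map_valEmbedding_Iic, sum_map]
  refine sum_congr rfl fun a ha => ?_
  have hab : a ≤ b := mem_Iic.1 ha
  rw [Fin.card_Icc, Fin.valEmbedding_apply]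
  congr 1
  omega

theorem subtreePolynomial_pathGraph (n : ℕ) :
    subtreePolynomial (pathGraph n) = ∑ b ∈ range n, ∑ k ∈ range (b + 1), X ^ (k + 1) := by
  rw [pathGraph, subtreePolynomial_hasse]
  simp only [sum_Iic_card_Icc (fun k => (X : ℝ[X]) ^ k)]
  exact Fin.sum_univ_eq_sum_range (fun b => ∑ k ∈ range (b + 1), (X : ℝ[X]) ^ (k + 1)) n

theorem subtreePolynomial_pathGraph_mul (n : ℕ) :
    subtreePolynomial (pathGraph n) * (X - 1) ^ 2 =
      X ^ (n + 2) - ((n : ℝ[X]) + 1) * X ^ 2 + (n : ℝ[X]) * X := by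
  rw [subtreePolynomial_pathGraph]
  induction n with
  | zero => simp
  | succ n ih =>
    have hgeom : (∑ k ∈ range (n + 1), (X : ℝ[X]) ^ (k + 1)) * (X - 1) = X ^ (n + 2) - X := by
      simp only [pow_succ _ (_ : ℕ), ← sum_mul]
      linear_combination X * geom_sum_mul (X : ℝ[X]) (n + 1)
    rw [sum_range_succ, add_mul]
    push_cast
    linear_combination ih + (X - 1) * hgeom

theorem eval_two_subtreePolynomial_pathGraph (n : ℕ) :
    (subtreePolynomial (pathGraph n)).eval 2 = 4 * 2 ^ n - 2 * n - 4 := by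
  have h : (subtreePolynomial (pathGraph n)).eval 2 * (2 - 1) ^ 2 =
      2 ^ (n + 2) - (n + 1) * 2 ^ 2 + n * 2 := by
    simpa using congrArg (eval 2) (subtreePolynomial_pathGraph_mul n)
  linear_combination h

theorem eval_two_derivative_subtreePolynomial_pathGraph (n : ℕ) :
    (derivative (subtreePolynomial (pathGraph n))).eval 2 =
      2 * n * 2 ^ n - 4 * 2 ^ n + n + 4 := by
  have h : (derivative (subtreePolynomial (pathGraph n))).eval 2 * (2 - 1) ^ 2 +
      (subtreePolynomial (pathGraph n)).eval 2 * (2 * (2 - 1)) =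
        (n + 2) * 2 ^ (n + 1) - (n + 1) * (2 * 2) + n := by
    simpa [derivative_pow, add_assoc, one_add_one_eq_two] using
      congrArg (fun p => (derivative p).eval 2) (subtreePolynomial_pathGraph_mul n)
  linear_combination h - 2 * eval_two_subtreePolynomial_pathGraph n

end PathGraph

section Comb

open Filter Topology

theorem comb_eq_corona (n : ℕ) : comb n = corona (SimpleGraph.pathGraph n) := by
  ext (i | i) (j | j)
  · simp only [comb, SimpleGraph.fromRel_adj, ne_eq, Sum.inl.injEq, corona,
      SimpleGraph.pathGraph_adj, and_iff_right_iff_imp]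
    grind
  · simp [comb, corona]
  · simp [comb, corona, eq_comm]
  · simp [comb, corona]

theorem numSubtrees_comb (n : ℕ) : (numSubtrees (comb n) : ℝ) = 4 * 2 ^ n - n - 4 := by
  rw [comb_eq_corona, numSubtrees_corona, eval_two_subtreePolynomial_pathGraph, Fintype.card_fin]
  ring

theorem totalSubtreeOrder_comb (n : ℕ) :
    (totalSubtreeOrder (comb n) : ℝ) = 6 * n * 2 ^ n - 12 * 2 ^ n + 4 * n + 12 := by
  rw [comb_eq_corona, totalSubtreeOrder_corona, eval_two_derivative_subtreePolynomial_pathGraph,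
    Fintype.card_fin]
  ring

theorem tendsto_numSubtrees_comb_div_two_pow :
    Tendsto (fun n : ℕ => (numSubtrees (comb n) : ℝ) / 2 ^ n) atTop (𝓝 4) := by
  have hpow (k : ℕ) : Tendsto (fun n : ℕ => (n : ℝ) ^ k / 2 ^ n) atTop (𝓝 0) :=
    tendsto_pow_const_div_const_pow_of_one_lt k one_lt_two
  have hlim := ((hpow 1).const_sub 4).sub ((hpow 0).const_mul 4)
  norm_num only at hlim
  refine hlim.congr fun n => ?_
  rw [numSubtrees_comb]
  field_simp

theorem tendsto_totalSubtreeOrder_comb_div_mul_two_pow :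
    Tendsto (fun n : ℕ => (totalSubtreeOrder (comb n) : ℝ) / (n * 2 ^ n)) atTop (𝓝 6) := by
  have hpow : Tendsto (fun n : ℕ => (n : ℝ) ^ 0 / 2 ^ n) atTop (𝓝 0) :=
    tendsto_pow_const_div_const_pow_of_one_lt 0 one_lt_two
  have hinv : Tendsto (fun n : ℕ => (n : ℝ)⁻¹) atTop (𝓝 0) := tendsto_inv_atTop_nhds_zero_nat
  have hlim := (((hinv.const_mul 12).const_sub 6).add (hpow.const_mul 4)).add
    ((hinv.mul hpow).const_mul 12)
  norm_num only at hlim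
  refine hlim.congr' ?_
  filter_upwards [eventually_ne_atTop 0] with n hn
  rw [totalSubtreeOrder_comb]
  field_simp

end Comb

theorem stmt18 :
    Filter.Tendsto (fun n : ℕ => subtreeDensity (comb n)) Filter.atTop
      (nhds (3 / 4 : ℝ)) := by
  rw [show (3 / 4 : ℝ) = 6 / 4 / 2 by norm_num]
  refine ((tendsto_totalSubtreeOrder_comb_div_mul_two_pow.div
    tendsto_numSubtrees_comb_div_two_pow four_ne_zero).div_const 2).congr fun n => ?_
  have hcard : (Fintype.card (Fin n ⊕ Fin n) : ℝ) = n * 2 := by simp [mul_two]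
  simp only [Pi.div_apply, subtreeDensity, avgSubtreeOrder, hcard]
  field_simp
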